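/- Let α ∈ (0,1) and let U : ℝ → ℝ be strictly increasing and continuous. If the Tail Quasi-Linear Mean ρ_U^α is both translation invariant (ρ_U^α(X+m) = ρ_U^α(X)+m for all m ∈ ℝ) and positively homogeneous (ρ_U^α(λX) = λρ_U^α(X) for all λ > 0) on all integrable random variables with continuous distribution functions, then ρ_U^α coincides with the Conditional Tail Expectation: ρ_U^α(X) = CTE_α(X) for all such X. -/

import Mathlib

open MeasureTheory Real Set

/-- Value at Risk at level `α`: `VaR_α(X) = inf {x | F_X(x) ≥ α}`. -/
noncomputable def VaR {Ω : Type*} [MeasurableSpace Ω] (P : Measure Ω) (X : Ω → ℝ) (α : ℝ) : ℝ :=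
  sInf {x : ℝ | α ≤ (P {ω | X ω ≤ x}).toReal}

/-- The cumulative distribution function of `X` under `P`. -/
noncomputable def cdfR {Ω : Type*} [MeasurableSpace Ω] (P : Measure Ω) (X : Ω → ℝ) (x : ℝ) : ℝ :=
  (P {ω | X ω ≤ x}).toReal

/-- Conditional expectation of `f` given the event `A`: `E[f | A]`. -/
noncomputable def condExpOn {Ω : Type*} [MeasurableSpace Ω] (P : Measure Ω) (f : Ω → ℝ)
    (A : Set Ω) : ℝ :=
  (∫ ω in A, f ω ∂P) / (P A).toReal

/-- The tail event `{X ≥ VaR_α(X)}`. -/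
def tailEvent {Ω : Type*} [MeasurableSpace Ω] (P : Measure Ω) (X : Ω → ℝ) (α : ℝ) : Set Ω :=
  {ω | VaR P X α ≤ X ω}

/-- Generalized inverse `U⁻¹(y) = inf {x | U(x) ≥ y}`. -/
noncomputable def ginv (U : ℝ → ℝ) (y : ℝ) : ℝ := sInf {x : ℝ | y ≤ U x}

/-- Tail Quasi-Linear Mean `ρ_U^α(X) = U⁻¹(E[U(X) | X ≥ VaR_α(X)])`. -/
noncomputable def TQLM {Ω : Type*} [MeasurableSpace Ω] (P : Measure Ω) (X : Ω → ℝ) (α : ℝ)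
    (U : ℝ → ℝ) : ℝ :=
  ginv U (condExpOn P (fun ω => U (X ω)) (tailEvent P X α))

/-- Conditional Tail Expectation `CTE_α(X) = E[X | X ≥ VaR_α(X)]`. -/
noncomputable def CTE {Ω : Type*} [MeasurableSpace Ω] (P : Measure Ω) (X : Ω → ℝ) (α : ℝ) : ℝ :=
  condExpOn P X (tailEvent P X α)

/-- Tail Conditional Entropic Risk Measure `ρ_γ^α(X) = (1/γ) log E[e^{γX} | X ≥ VaR_α(X)]`. -/
noncomputable def TCERM {Ω : Type*} [MeasurableSpace Ω] (P : Measure Ω) (X : Ω → ℝ) (α : ℝ)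
    (γ : ℝ) : ℝ :=
  (1 / γ) * Real.log (condExpOn P (fun ω => Real.exp (γ * X ω)) (tailEvent P X α))

section TailRisk

open Filter Topology

variable {Ω : Type*} [MeasurableSpace Ω] {P : Measure Ω} [IsProbabilityMeasure P]

theorem cdfR_eq_cdf_map {X : Ω → ℝ} (hX : Measurable X) :
    cdfR P X = ProbabilityTheory.cdf (P.map X) := by
  have := Measure.isProbabilityMeasure_map (μ := P) hX.aemeasurable
  ext x
  rw [ProbabilityTheory.cdf_eq_real, Measure.real, Measure.map_apply hX measurableSet_Iic]
  rfl

theorem continuous_cdfR_iff {X : Ω → ℝ} (hX : Measurable X) :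
    Continuous (cdfR P X) ↔ ∀ x, P (X ⁻¹' {x}) = 0 := by
  have := Measure.isProbabilityMeasure_map (μ := P) hX.aemeasurable
  set F := ProbabilityTheory.cdf (P.map X) with hF
  rw [cdfR_eq_cdf_map hX, continuous_iff_continuousAt]
  refine forall_congr' fun x => ?_
  rw [F.mono.continuousAt_iff_leftLim_eq_rightLim, F.rightLim_eq,
    ← Measure.map_apply hX (measurableSet_singleton x), ← ProbabilityTheory.measure_cdf (P.map X),
    StieltjesFunction.measure_singleton, ENNReal.ofReal_eq_zero, sub_nonpos]
  exact ⟨fun h => h.ge, fun h => (F.mono.leftLim_le le_rfl).antisymm h⟩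

theorem measureReal_setOf_le_eq_one_sub_cdfR {X : Ω → ℝ} (hX : Measurable X)
    (hc : Continuous (cdfR P X)) (s : ℝ) : P.real {ω | s ≤ X ω} = 1 - cdfR P X s := by
  have h0 := (continuous_cdfR_iff hX).1 hc s
  have hae : {ω | s ≤ X ω} =ᵐ[P] ((X ⁻¹' Iic s)ᶜ : Set Ω) := by
    have : ∀ᵐ ω ∂P, X ω ≠ s := by
      rw [ae_iff]; simpa [Set.preimage] using h0
    filter_upwards [this] with ω hω
    apply propext
    change s ≤ X ω ↔ ¬ X ω ≤ s
    rw [not_le]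
    exact ⟨fun h => lt_of_le_of_ne h (Ne.symm hω), le_of_lt⟩
  rw [measureReal_congr hae, probReal_compl_eq_one_sub (hX measurableSet_Iic)]
  rfl

theorem cdfR_VaR {X : Ω → ℝ} (hX : Measurable X) (hc : Continuous (cdfR P X))
    {α : ℝ} (hα : α ∈ Ioo (0 : ℝ) 1) :
    BddBelow {x | α ≤ cdfR P X x} ∧ cdfR P X (VaR P X α) = α := by
  have htop : Tendsto (cdfR P X) atTop (𝓝 1) := by
    rw [cdfR_eq_cdf_map hX]; exact ProbabilityTheory.tendsto_cdf_atTop _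
  have hbot : Tendsto (cdfR P X) atBot (𝓝 0) := by
    rw [cdfR_eq_cdf_map hX]; exact ProbabilityTheory.tendsto_cdf_atBot _
  have hmono : Monotone (cdfR P X) := by
    rw [cdfR_eq_cdf_map hX]; exact (ProbabilityTheory.cdf _).mono
  have hne : {x | α ≤ cdfR P X x}.Nonempty := (htop.eventually (le_mem_nhds hα.2)).exists
  obtain ⟨a, ha⟩ := (hbot.eventually (gt_mem_nhds hα.1)).exists
  have hbdd : BddBelow {x | α ≤ cdfR P X x} :=
    ⟨a, fun x hx => le_of_not_gt fun h => absurd (hmono h.le) (not_le.2 (ha.trans_le hx))⟩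
  refine ⟨hbdd, le_antisymm ?_ ?_⟩
  · refine le_of_tendsto (hc.continuousWithinAt (s := Iio (VaR P X α)) ) ?_
    filter_upwards [self_mem_nhdsWithin] with x hx
    exact le_of_not_ge fun h => not_le.2 hx (csInf_le hbdd h)
  · exact (isClosed_le continuous_const hc).csInf_mem hne hbdd

theorem measureReal_tailEvent {X : Ω → ℝ} (hX : Measurable X) (hc : Continuous (cdfR P X))
    {α : ℝ} (hα : α ∈ Ioo (0 : ℝ) 1) : P.real (tailEvent P X α) = 1 - α := by
  rw [tailEvent, measureReal_setOf_le_eq_one_sub_cdfR hX hc, (cdfR_VaR hX hc hα).2]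

theorem continuous_cdfR_comp {X : Ω → ℝ} (hX : Measurable X) (hc : Continuous (cdfR P X))
    {g : ℝ → ℝ} (hg : StrictMono g) : Continuous (cdfR P fun ω => g (X ω)) := by
  refine (continuous_cdfR_iff (hg.monotone.measurable.comp hX)).2 fun y => ?_
  by_cases hy : ∃ x, g x = y
  · obtain ⟨x, rfl⟩ := hy
    refine measure_mono_null (fun ω hω => ?_) ((continuous_cdfR_iff hX).1 hc x)
    exact hg.injective hω
  · convert measure_empty (μ := P)
    ext ω
    simpa using fun h => hy ⟨_, h⟩

theorem tailEvent_comp_ae_eq {X : Ω → ℝ} (hX : Measurable X) (hc : Continuous (cdfR P X))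
    {α : ℝ} (hα : α ∈ Ioo (0 : ℝ) 1) {g : ℝ → ℝ} (hg : StrictMono g) :
    tailEvent P (fun ω => g (X ω)) α =ᵐ[P] tailEvent P X α := by
  have hgX : Measurable fun ω => g (X ω) := hg.monotone.measurable.comp hX
  have h1 := measureReal_tailEvent hX hc hα
  have h2 := measureReal_tailEvent hgX (continuous_cdfR_comp hX hc hg) hα
  have hm1 : MeasurableSet (tailEvent P X α) := hX measurableSet_Ici
  have hm2 : MeasurableSet (tailEvent P (fun ω => g (X ω)) α) := hgX measurableSet_Ici
  have heq : P (tailEvent P X α) = P (tailEvent P (fun ω => g (X ω)) α) :=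
    (measureReal_eq_measureReal_iff).1 (h1.trans h2.symm)
  by_cases h : VaR P (fun ω => g (X ω)) α ≤ g (VaR P X α)
  · refine (ae_eq_of_subset_of_measure_ge (fun ω hω => ?_) heq.ge
      hm1.nullMeasurableSet (measure_ne_top _ _)).symm
    exact h.trans (hg.monotone hω)
  · refine ae_eq_of_subset_of_measure_ge (fun ω hω => ?_) heq.le
      hm2.nullMeasurableSet (measure_ne_top _ _)
    exact (hg.lt_iff_lt.1 ((not_le.1 h).trans_le hω)).le

theorem ginv_apply {U : ℝ → ℝ} (hU : StrictMono U) (x : ℝ) : ginv U (U x) = x := by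
  have : {y | U x ≤ U y} = Ici x := by ext y; exact hU.le_iff_le
  rw [ginv, this, csInf_Ici]

theorem integrable_comp_of_mem_Icc {U : ℝ → ℝ} (hU : Monotone U) {Y : Ω → ℝ} (hY : Measurable Y)
    {a b : ℝ} (hab : ∀ ω, Y ω ∈ Icc a b) : Integrable (fun ω => U (Y ω)) P :=
  Integrable.of_mem_Icc (U a) (U b) (hU.measurable.comp hY).aemeasurable
    (ae_of_all _ fun ω => ⟨hU (hab ω).1, hU (hab ω).2⟩)

theorem apply_TQLM_of_mem_Icc {U : ℝ → ℝ} (hU : StrictMono U) (hUc : Continuous U) {Y : Ω → ℝ}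
    (hY : Measurable Y) (hc : Continuous (cdfR P Y)) {α : ℝ} (hα : α ∈ Ioo (0 : ℝ) 1)
    {a b : ℝ} (hab : ∀ ω, Y ω ∈ Icc a b) :
    U (TQLM P Y α U) = condExpOn P (fun ω => U (Y ω)) (tailEvent P Y α) := by
  have hT := measureReal_tailEvent hY hc hα
  have hpos : 0 < P.real (tailEvent P Y α) := by rw [hT]; linarith [hα.2]
  have hUY := (integrable_comp_of_mem_Icc (P := P) hU.monotone hY hab).integrableOn
    (s := tailEvent P Y α)
  have hmem : condExpOn P (fun ω => U (Y ω)) (tailEvent P Y α) ∈ Icc (U a) (U b) := by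
    have h1 := setIntegral_mono_on (integrableOn_const (C := U a)) hUY
      (hY measurableSet_Ici) fun ω _ => hU.monotone (hab ω).1
    have h2 := setIntegral_mono_on hUY (integrableOn_const (C := U b))
      (hY measurableSet_Ici) fun ω _ => hU.monotone (hab ω).2
    rw [setIntegral_const, smul_eq_mul] at h1 h2
    exact ⟨(le_div_iff₀' hpos).2 h1, (div_le_iff₀' hpos).2 h2⟩
  obtain ⟨ω⟩ := P.nonempty_of_neZero
  obtain ⟨x, -, hx⟩ := intermediate_value_Icc ((hab ω).1.trans (hab ω).2) hUc.continuousOn hmem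
  rw [TQLM, ← hx, ginv_apply hU]

theorem condExpOn_tailEvent_comp {X : Ω → ℝ} (hX : Measurable X) (hc : Continuous (cdfR P X))
    {α : ℝ} (hα : α ∈ Ioo (0 : ℝ) 1) {g : ℝ → ℝ} (hg : StrictMono g) (f : Ω → ℝ) :
    condExpOn P f (tailEvent P (fun ω => g (X ω)) α) = condExpOn P f (tailEvent P X α) := by
  have h := tailEvent_comp_ae_eq hX hc hα hg
  rw [condExpOn, condExpOn, setIntegral_congr_set h, measure_congr h]

/-- The unit step at `s`, perturbed by `ε * arctan`. -/
noncomputable def perturbedStep (s ε x : ℝ) : ℝ := (Ici s).indicator 1 x + ε * arctan x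

theorem strictMono_perturbedStep (s : ℝ) {ε : ℝ} (hε : 0 < ε) :
    StrictMono (perturbedStep s ε) := by
  refine Monotone.add_strictMono (fun x y hxy => ?_) (arctan_strictMono.const_mul hε)
  by_cases hx : s ≤ x
  · simp [indicator, hx, hx.trans hxy]
  · simp only [indicator, mem_Ici, hx, if_false]
    split_ifs <;> simp

theorem perturbedStep_mem_Icc (s : ℝ) {ε : ℝ} (hε : 0 < ε) (hε1 : ε ≤ 1) (x : ℝ) :
    perturbedStep s ε x ∈ Icc (-2) 3 := by
  have h1 : (Ici s).indicator (1 : ℝ → ℝ) x ∈ Icc 0 1 := by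
    by_cases hx : s ≤ x <;> simp [indicator, hx]
  have h2 : arctan x < 2 := (arctan_lt_pi_div_two x).trans (by linarith [pi_lt_four])
  have h3 : -2 < arctan x := lt_trans (by linarith [pi_lt_four]) (neg_pi_div_two_lt_arctan x)
  constructor <;> unfold perturbedStep <;> nlinarith [h1.1, h1.2]

theorem tendsto_condExpOn_perturbedStep {X : Ω → ℝ} (hX : Measurable X) {U : ℝ → ℝ}
    (hU : Monotone U) (hUc : Continuous U) {T : Set Ω} (hT : 0 < P.real T) {s p : ℝ}
    (hsT : {ω | s ≤ X ω} ⊆ T) (hs : P.real {ω | s ≤ X ω} = p * P.real T)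
    (m : ℝ) {lam : ℝ} (hlam : 0 < lam) {ε : ℕ → ℝ} (hε : ∀ n, 0 < ε n) (hε1 : ∀ n, ε n ≤ 1)
    (hε0 : Tendsto ε atTop (𝓝 0)) :
    Tendsto (fun n => condExpOn P (fun ω => U (lam * perturbedStep s (ε n) (X ω) + m)) T) atTop
      (𝓝 ((1 - p) * U m + p * U (lam + m))) := by
  have hB : MeasurableSet {ω | s ≤ X ω} := hX measurableSet_Ici
  have hlim : (1 - p) * U m + p * U (lam + m) =
      condExpOn P (fun ω => U (lam * (Ici s).indicator 1 (X ω) + m)) T := by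
    have : (fun ω => U (lam * (Ici s).indicator 1 (X ω) + m)) = fun ω =>
        {ω | s ≤ X ω}.indicator (fun _ => U (lam + m) - U m) ω + U m := by
      ext ω
      by_cases h : s ≤ X ω <;> simp [indicator, h]
    rw [condExpOn, this, integral_add ((integrable_const _).indicator hB) (integrable_const _),
      setIntegral_indicator hB, inter_eq_self_of_subset_right hsT, setIntegral_const,
      setIntegral_const, hs, smul_eq_mul, smul_eq_mul]
    rw [← Measure.real, eq_div_iff hT.ne']
    ring
  rw [hlim]
  refine Tendsto.div_const (tendsto_integral_of_dominated_convergence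
    (fun _ => |U (lam * (-2) + m)| + |U (lam * 3 + m)|) (fun n => ?_) (integrable_const _)
    (fun n => ae_of_all _ fun ω => ?_) (ae_of_all _ fun ω => ?_)) _
  · exact (hU.measurable.comp ((((strictMono_perturbedStep s (hε n)).monotone.measurable.comp
      hX).const_mul lam).add_const m)).aestronglyMeasurable
  · obtain ⟨h1, h2⟩ := perturbedStep_mem_Icc s (hε n) (hε1 n) (X ω)
    have h3 : U (lam * (-2) + m) ≤ U (lam * perturbedStep s (ε n) (X ω) + m) := hU (by gcongr)
    have h4 : U (lam * perturbedStep s (ε n) (X ω) + m) ≤ U (lam * 3 + m) := hU (by gcongr)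
    rw [norm_eq_abs, abs_le]
    constructor
    · linarith [neg_abs_le (U (lam * (-2) + m)), abs_nonneg (U (lam * 3 + m))]
    · linarith [le_abs_self (U (lam * 3 + m)), abs_nonneg (U (lam * (-2) + m))]
  · have h := (hε0.mul_const (arctan (X ω))).const_add ((Ici s).indicator (1 : ℝ → ℝ) (X ω))
    rw [zero_mul, add_zero] at h
    exact (hUc.tendsto _).comp ((h.const_mul lam).add_const m)

theorem exists_measureReal_setOf_le_eq {X : Ω → ℝ} (hX : Measurable X)
    (hc : Continuous (cdfR P X)) {α : ℝ} (hα : α ∈ Ioo (0 : ℝ) 1) {p : ℝ}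
    (hp : p ∈ Ioo (0 : ℝ) 1) : ∃ s, {ω | s ≤ X ω} ⊆ tailEvent P X α ∧
      P.real {ω | s ≤ X ω} = p * P.real (tailEvent P X α) := by
  obtain ⟨hα0, hα1⟩ := hα
  obtain ⟨hp0, hp1⟩ := hp
  have hβ : 1 - p * (1 - α) ∈ Ioo (0 : ℝ) 1 := by constructor <;> nlinarith
  refine ⟨VaR P X (1 - p * (1 - α)), fun ω (hω : _ ≤ X ω) => show _ ≤ X ω from le_trans ?_ hω, ?_⟩
  · refine csInf_le (cdfR_VaR hX hc ⟨hα0, hα1⟩).1 ?_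
    change α ≤ cdfR P X _
    rw [(cdfR_VaR hX hc hβ).2]
    nlinarith
  · rw [measureReal_tailEvent hX hc ⟨hα0, hα1⟩]
    exact (measureReal_tailEvent hX hc hβ).trans (by ring)

end TailRisk

/-- A strictly increasing function whose midpoint values are a fixed weighted mean of
the end point values satisfies the midpoint equation. -/
theorem StrictMono.map_midpoint_of_weighted {U : ℝ → ℝ} (hU : StrictMono U) {p : ℝ}
    (h : ∀ x y, x < y → U ((x + y) / 2) = (1 - p) * U x + p * U y) (x y : ℝ) :
    U (midpoint ℝ x y) = midpoint ℝ (U x) (U y) := by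
  have hp : p = 1 / 2 := by
    have h1 := h 0 2 (by norm_num)
    have h2 := h 1 3 (by norm_num)
    have h3 := h 2 4 (by norm_num)
    have h4 := h 0 4 (by norm_num)
    norm_num at h1 h2 h3 h4
    have i0 : U 0 < U 1 := hU (by norm_num)
    have i1 : U 1 < U 2 := hU (by norm_num)
    have i2 : U 2 < U 3 := hU (by norm_num)
    have e1 : (1 - p) * (U 1 - U 0) = p * (U 2 - U 1) := by linear_combination h1
    have e2 : (1 - p) * (U 2 - U 1) = p * (U 3 - U 2) := by linear_combination h2
    have e3 : (1 - p) * (U 3 - U 2) = p * (U 4 - U 3) := by linear_combination h3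
    have e4 : (1 - p) * (U 2 - U 0) = p * (U 4 - U 2) := by linear_combination h4
    have hp0 : p ≠ 0 := by
      rintro rfl
      linarith
    have e5 : U 2 - U 1 = U 4 - U 3 := mul_left_cancel₀ hp0 (by linear_combination e4 - e1 - e2)
    have e6 : (1 - 2 * p) * (U 2 - U 1) = 0 := by
      linear_combination (1 - p) * e2 + p * e3 - p ^ 2 * e5
    rcases mul_eq_zero.1 e6 with h | h <;> linarith
  subst hp
  have key : U ((x + y) / 2) = (U x + U y) / 2 := by
    rcases lt_trichotomy x y with hxy | rfl | hxy
    · rw [h x y hxy]; ring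
    · simp
    · rw [add_comm x y, h y x hxy]; ring
  rw [midpoint_eq_smul_add, midpoint_eq_smul_add]
  simp only [smul_eq_mul, invOf_eq_inv]
  rw [inv_mul_eq_div, key]; ring

/-- If the TQLM `ρ_U^α` is translation invariant and positively
homogeneous on all integrable random variables with continuous distribution
functions, then it coincides with the Conditional Tail Expectation. -/
theorem TQLM_eq_CTE_of_translation_invariant_and_posHom
    {Ω : Type*} [MeasurableSpace Ω] (P : Measure Ω) [IsProbabilityMeasure P]
    (α : ℝ) (hα : α ∈ Set.Ioo (0:ℝ) 1)
    (U : ℝ → ℝ) (hU : StrictMono U) (hUc : Continuous U)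
    (hTI : ∀ X : Ω → ℝ, Measurable X → Integrable X P → Continuous (cdfR P X) →
      Integrable (fun ω => U (X ω)) P → ∀ m : ℝ,
      TQLM P (fun ω => X ω + m) α U = TQLM P X α U + m)
    (hPH : ∀ X : Ω → ℝ, Measurable X → Integrable X P → Continuous (cdfR P X) →
      Integrable (fun ω => U (X ω)) P → ∀ lam : ℝ, 0 < lam →
      TQLM P (fun ω => lam * X ω) α U = lam * TQLM P X α U) :
    ∀ X : Ω → ℝ, Measurable X → Integrable X P → Continuous (cdfR P X) →
      Integrable (fun ω => U (X ω)) P →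
      TQLM P X α U = CTE P X α := by
  intro X hX hXi hc hUX
  set T := tailEvent P X α with hTdef
  have hTreal : P.real T = 1 - α := measureReal_tailEvent hX hc hα
  have hT : 0 < P.real T := by rw [hTreal]; linarith [hα.2]
  have hU0 : U 0 < U (1 / 2) := hU (by norm_num)
  have hU1 : U (1 / 2) < U 1 := hU (by norm_num)
  obtain ⟨p, hp⟩ : ∃ p, p = (U (1 / 2) - U 0) / (U 1 - U 0) := ⟨_, rfl⟩
  have hp_mem : p ∈ Ioo (0 : ℝ) 1 := by
    rw [hp]
    exact ⟨div_pos (by linarith) (by linarith), (div_lt_one (by linarith)).2 (by linarith)⟩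
  have hp_half : (1 - p) * U 0 + p * U 1 = U (1 / 2) := by
    rw [hp]
    field_simp [(by linarith : U 1 - U 0 ≠ 0)]
    ring
  obtain ⟨s, hsT, hs⟩ := exists_measureReal_setOf_le_eq hX hc hα hp_mem
  let ε : ℕ → ℝ := fun n => 1 / ((n : ℝ) + 1)
  have hε : ∀ n, 0 < ε n := fun n => Nat.one_div_pos_of_nat
  have hε1 : ∀ n, ε n ≤ 1 := fun n => by
    simpa [ε] using inv_le_one_of_one_le₀ (by linarith [n.cast_nonneg (α := ℝ)] : 1 ≤ (n : ℝ) + 1)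
  have hε0 : Filter.Tendsto ε Filter.atTop (nhds 0) := tendsto_one_div_add_atTop_nhds_zero_nat
  let Y : ℕ → Ω → ℝ := fun n ω => perturbedStep s (ε n) (X ω)
  have hUY : ∀ n (lam : ℝ), 0 < lam → ∀ m : ℝ, U (lam * TQLM P (Y n) α U + m) =
      condExpOn P (fun ω => U (lam * Y n ω + m)) T := by
    intro n lam hlam m
    have hg := strictMono_perturbedStep s (hε n)
    have hY : ∀ ω, Y n ω ∈ Icc (-2) 3 := fun ω => perturbedStep_mem_Icc s (hε n) (hε1 n) _
    have hlamY : ∀ ω, lam * Y n ω ∈ Icc (lam * (-2)) (lam * 3) := fun ω =>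
      ⟨mul_le_mul_of_nonneg_left (hY ω).1 hlam.le, mul_le_mul_of_nonneg_left (hY ω).2 hlam.le⟩
    have hlamYm : ∀ ω, lam * Y n ω + m ∈ Icc (lam * (-2) + m) (lam * 3 + m) := fun ω =>
      ⟨add_le_add_left (hlamY ω).1 m, add_le_add_left (hlamY ω).2 m⟩
    have hYm : Measurable (Y n) := hg.monotone.measurable.comp hX
    have hlamg : StrictMono fun x => lam * perturbedStep s (ε n) x := hg.const_mul hlam
    have hlamgm : StrictMono fun x => lam * perturbedStep s (ε n) x + m := hlamg.add_const m
    rw [← hPH (Y n) hYm (integrable_comp_of_mem_Icc monotone_id hYm hY)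
        (continuous_cdfR_comp hX hc hg) (integrable_comp_of_mem_Icc hU.monotone hYm hY) lam hlam,
      ← hTI _ (hYm.const_mul lam)
        (integrable_comp_of_mem_Icc monotone_id (hYm.const_mul lam) hlamY)
        (continuous_cdfR_comp hX hc hlamg)
        (integrable_comp_of_mem_Icc hU.monotone (hYm.const_mul lam) hlamY) m,
      apply_TQLM_of_mem_Icc hU hUc ((hYm.const_mul lam).add_const m)
        (continuous_cdfR_comp hX hc hlamgm) hα hlamYm]
    exact condExpOn_tailEvent_comp hX hc hα hlamgm _
  have hlim : ∀ lam : ℝ, 0 < lam → ∀ m : ℝ, Filter.Tendsto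
      (fun n => U (lam * TQLM P (Y n) α U + m)) Filter.atTop
      (nhds ((1 - p) * U m + p * U (lam + m))) := by
    intro lam hlam m
    simp only [hUY _ lam hlam m]
    exact tendsto_condExpOn_perturbedStep hX hU.monotone hUc hT hsT hs m hlam hε hε1 hε0
  have hemb : Topology.IsEmbedding U :=
    hU.isEmbedding_of_ordConnected (isPreconnected_range hUc).ordConnected
  have hhalf : Filter.Tendsto (fun n => TQLM P (Y n) α U) Filter.atTop (nhds (1 / 2)) := by
    rw [hemb.tendsto_nhds_iff, ← hp_half]
    simpa [Function.comp_def] using hlim 1 one_pos 0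
  have hmid := hU.map_midpoint_of_weighted (p := p) fun x y hxy => by
    have h1 := hlim (y - x) (sub_pos.2 hxy) x
    have h2 := (hUc.tendsto _).comp ((hhalf.const_mul (y - x)).add_const x)
    have h3 := tendsto_nhds_unique h2 h1
    rw [sub_add_cancel] at h3
    rw [← h3]
    congr 1
    ring
  let L : ℝ →ᵃ[ℝ] ℝ := AffineMap.ofMapMidpoint U hmid hUc
  have hUlin : ∀ x, U x = L.linear 1 * x + U 0 := fun x => by
    have h := congrFun L.decomp x
    have h1 : L.linear x = L.linear 1 * x := by
      rw [mul_comm, ← smul_eq_mul, ← map_smul, smul_eq_mul, mul_one]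
    rw [← h1]
    exact h
  have hE : condExpOn P (fun ω => U (X ω)) T = U (CTE P X α) := by
    rw [hUlin (CTE P X α), CTE, condExpOn, condExpOn, ← hTdef]
    simp only [hUlin (X _)]
    rw [integral_add (hXi.integrableOn.const_mul _) (integrable_const _), integral_const_mul,
      setIntegral_const, smul_eq_mul, ← Measure.real]
    field_simp
  rw [TQLM, hE, ginv_apply hU]
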